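/- arXiv:1401.6450 — 2 statements merged into one kernel-verified Lean document; each statement's English description precedes it below -/
import Mathlib

section
/- For every finite V ⊂ ℤ^d and every measurable A ⊆ Ω, the random variable γ_V^Y(X, A) is a version of the conditional probability P[X ∈ A | σ(X_w : w ∉ V) ∨ σ(Y)]; that is, almost surely P[X ∈ A | X_{V^c}, Y] = γ_V^Y(X, A). -/
open MeasureTheory Filter

noncomputable section

namespace RandomField

/-- Sites of the lattice `ℤ^d`. -/
abbrev Site (d : ℕ) := Fin d → ℤ

variable {E : Type*} [MeasurableSpace E] {d : ℕ}

/-- Configurations `E^{ℤ^d}`. -/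
abbrev Conf (E : Type*) (d : ℕ) := Site d → E

/-- The cylinder σ-algebra `σ(X_S)` on `E^{ℤ^d}` generated by the coordinates in `S`. -/
def cylσ (E : Type*) [MeasurableSpace E] {d : ℕ} (S : Set (Site d)) :
    MeasurableSpace (Conf E d) :=
  ⨆ v ∈ S, MeasurableSpace.comap (fun x : Conf E d => x v) inferInstance

/-- Nearest neighbors: `‖v - w‖ = 1`. -/
def Adj (v w : Site d) : Prop := (∑ i, (v i - w i).natAbs) = 1

/-- The exterior boundary `∂V` of a finite set of sites `V`. -/
def bdry (V : Finset (Site d)) : Set (Site d) := {w | w ∉ V ∧ ∃ v ∈ V, Adj v w}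

/-- A specification: a family of probability kernels `γ_V` indexed by finite `V ⊂ ℤ^d` with
(1) `γ_V(·, A)` is `σ(X_{∂V})`-measurable for `A ∈ σ(X_V)`;
(2) `γ_V(x, A) = 1_A(x)` for `A ∈ σ(X_{V^c})`;
(3) `γ_V γ_W = γ_V` for `W ⊆ V`. -/
structure IsSpecification (γ : Finset (Site d) → Conf E d → Measure (Conf E d)) : Prop where
  prob : ∀ V x, IsProbabilityMeasure (γ V x)
  kernel : ∀ (V) (A : Set (Conf E d)), MeasurableSet A → Measurable fun x => γ V x A
  bdryMeas : ∀ (V : Finset (Site d)) (A : Set (Conf E d)),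
    MeasurableSet[cylσ E (↑V : Set (Site d))] A →
    Measurable[cylσ E (bdry V)] fun x => γ V x A
  proper : ∀ (V : Finset (Site d)) (A : Set (Conf E d)),
    MeasurableSet[cylσ E ((↑V : Set (Site d))ᶜ)] A →
    ∀ x, γ V x A = A.indicator (fun _ => (1 : ENNReal)) x
  consistent : ∀ V W : Finset (Site d), W ⊆ V → ∀ (A : Set (Conf E d)), MeasurableSet A →
    ∀ x, ∫⁻ z, γ W z A ∂(γ V x) = γ V x A

/-- The conditional specification
`γ_V^y(x, A) = ∫ 1_A(z) ∏_{v∈V} g_v(z_v, y_v) γ_V(x, dz) / ∫ ∏_{v∈V} g_v(z_v, y_v) γ_V(x, dz)`. -/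
def condKer {F : Type*} (γ : Finset (Site d) → Conf E d → Measure (Conf E d))
    (g : Site d → E → F → ℝ) (y : Site d → F) (V : Finset (Site d)) (x : Conf E d) :
    Measure (Conf E d) :=
  let ρ := (γ V x).withDensity fun z => ENNReal.ofReal (∏ v ∈ V, g v (z v) (y v))
  (ρ Set.univ)⁻¹ • ρ

/-- The σ-algebra `σ(X_w : w ∉ V)` on the underlying probability space. -/
def outsideσ {Ω : Type*} [MeasurableSpace Ω] (X : Ω → Conf E d) (V : Finset (Site d)) :
    MeasurableSpace Ω :=
  ⨆ w ∈ ((↑V : Set (Site d))ᶜ), MeasurableSpace.comap (fun ω => X ω w) inferInstance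

/-!
Given `X`, the observations outside `V` depend only on `X` outside `V`, so weighting the law of `X`
by an event of such observations leaves it invariant under `γ_V`, because `γ_V` is proper. Under
any such weighted law `μ`, the pair `(X, Y_V)` has density `∏_{v ∈ V} g_v(x_v, y_v)` with respect to
`μ ⊗ φ^V`, and Bayes' formula for the invariant proper kernel `γ_V` identifies the conditional law
of `X` given `X_{V^c}` and `Y_V` as `γ_V^Y`. Its normalising constant is almost surely finite since
its integral against `μ ⊗ φ^V` is the total mass of the law of `(X, Y_V)`. Cylinder events of `Y`
intersected with events of `X_{V^c}` form a generating π-system, which concludes.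
-/

open ProbabilityTheory
open scoped ENNReal

section PiSystem

variable {α : Type*} {C D : Set (Set α)}

lemma isPiSystem_image2_inter (hC : IsPiSystem C) (hD : IsPiSystem D) :
    IsPiSystem (Set.image2 (· ∩ ·) C D) := by
  rintro _ ⟨s, hs, t, ht, rfl⟩ _ ⟨s', hs', t', ht', rfl⟩ hne
  rw [Set.inter_inter_inter_comm] at hne ⊢
  exact ⟨_, hC s hs s' hs' hne.left, _, hD t ht t' ht' hne.right, rfl⟩

lemma generateFrom_image2_inter (hC : Set.univ ∈ C) (hD : Set.univ ∈ D) :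
    MeasurableSpace.generateFrom (Set.image2 (· ∩ ·) C D) =
      MeasurableSpace.generateFrom C ⊔ MeasurableSpace.generateFrom D := by
  rw [MeasurableSpace.generateFrom_sup_generateFrom]
  refine le_antisymm (MeasurableSpace.generateFrom_le ?_) (MeasurableSpace.generateFrom_mono ?_)
  · rintro _ ⟨s, hs, t, ht, rfl⟩
    exact (MeasurableSpace.measurableSet_generateFrom (.inl hs)).inter
      (MeasurableSpace.measurableSet_generateFrom (.inr ht))
  · rintro s (hs | hs)
    · exact ⟨s, hs, _, hD, Set.inter_univ s⟩
    · exact ⟨_, hC, s, hs, Set.univ_inter s⟩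

lemma generateFrom_image2_inter_measurableSet (m₁ m₂ : MeasurableSpace α) :
    MeasurableSpace.generateFrom (Set.image2 (· ∩ ·)
      {s | MeasurableSet[m₁] s} {t | MeasurableSet[m₂] t}) = m₁ ⊔ m₂ := by
  rw [generateFrom_image2_inter (Set.mem_ofPred.2 (@MeasurableSet.univ _ m₁))
      (Set.mem_ofPred.2 (@MeasurableSet.univ _ m₂)),
    m₁.generateFrom_measurableSet, m₂.generateFrom_measurableSet]

lemma measure_ext_of_prod_univ_pi {ι : Type*} [Finite ι] {F : ι → Type*} [MeasurableSpace α]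
    [∀ i, MeasurableSpace (F i)] {μ ν : Measure (α × ∀ i, F i)} [IsFiniteMeasure μ]
    (h : ∀ (B : Set α) (D : ∀ i, Set (F i)), MeasurableSet B → (∀ i, MeasurableSet (D i)) →
      μ (B ×ˢ Set.univ.pi D) = ν (B ×ˢ Set.univ.pi D)) : μ = ν := by
  refine ext_of_generate_finite _ (generateFrom_eq_prod MeasurableSpace.generateFrom_measurableSet
    generateFrom_pi isCountablySpanning_measurableSet
    (.pi fun i => isCountablySpanning_measurableSet)).symm
    (MeasurableSpace.isPiSystem_measurableSet.prod isPiSystem_pi) ?_ ?_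
  · rintro _ ⟨B, hB, _, ⟨D, hD, rfl⟩, rfl⟩
    exact h B D hB fun i => hD i trivial
  · simpa using h Set.univ (fun _ => Set.univ) .univ fun _ => .univ

end PiSystem

section CondExp

variable {Ω : Type*} {m mΩ : MeasurableSpace Ω} {P : Measure Ω} [IsFiniteMeasure P] {T : Set Ω}

lemma setLIntegral_ofReal_of_ae_eq_condExp_indicator (hm : m ≤ mΩ) (hT : MeasurableSet T)
    {f : Ω → ℝ} (hf : f =ᵐ[P] P[T.indicator (fun _ => (1 : ℝ)) | m]) {s : Set Ω}
    (hs : MeasurableSet[m] s) :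
    ∫⁻ ω in s, ENNReal.ofReal (f ω) ∂P = P (s ∩ T) := by
  have hcond : P⁻[fun ω => ENNReal.ofReal (T.indicator (fun _ => (1 : ℝ)) ω) | m] =ᵐ[P]
      fun ω => ENNReal.ofReal (f ω) := by
    filter_upwards [condLExp_ofReal m ((integrable_const (1 : ℝ)).indicator hT)
      (ae_of_all _ (Set.indicator_nonneg fun _ _ => zero_le_one)), hf] with ω hω hfω
    rw [hω, hfω]
  have hind : (fun ω => ENNReal.ofReal (T.indicator (fun _ => (1 : ℝ)) ω)) = T.indicator 1 := by
    ext ω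
    by_cases hω : ω ∈ T <;> simp [hω]
  rw [← setLIntegral_congr_fun_ae (hm s hs) (hcond.mono fun ω hω _ => hω),
    setLIntegral_condLExp hm P _ hs, hind, lintegral_indicator_one hT, Measure.restrict_apply hT,
    Set.inter_comm]

lemma toReal_ae_eq_condExp_indicator_of_isPiSystem (hm : m ≤ mΩ) {C : Set (Set Ω)}
    (hgen : m = MeasurableSpace.generateFrom C) (hpi : IsPiSystem C) (huniv : Set.univ ∈ C)
    (hT : MeasurableSet T) {f : Ω → ℝ≥0∞} (hf : Measurable[m] f)
    (hfC : ∀ s ∈ C, ∫⁻ ω in s, f ω ∂P = P (s ∩ T)) :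
    (fun ω => (f ω).toReal) =ᵐ[P] P[T.indicator (fun _ => (1 : ℝ)) | m] := by
  have hCm : ∀ s ∈ C, MeasurableSet[m] s := fun s hs =>
    hgen ▸ MeasurableSpace.measurableSet_generateFrom hs
  have hmeasures : (P.restrict T).trim hm = (P.withDensity f).trim hm := by
    have hagree : ∀ s ∈ C, (P.restrict T).trim hm s = (P.withDensity f).trim hm s := by
      intro s hs
      rw [trim_measurableSet_eq hm (hCm s hs), trim_measurableSet_eq hm (hCm s hs),
        Measure.restrict_apply (hm s (hCm s hs)), withDensity_apply _ (hm s (hCm s hs)), hfC s hs]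
    exact ext_of_generate_finite C hgen hpi hagree (hagree _ huniv)
  have hcond : f =ᵐ[P] P⁻[T.indicator 1 | m] := by
    refine ae_eq_condLExp hm P _ hf fun s hs => ?_
    rw [← withDensity_apply _ (hm s hs), ← trim_measurableSet_eq hm hs, ← hmeasures,
      trim_measurableSet_eq hm hs, lintegral_indicator_one hT, Measure.restrict_apply hT,
      Measure.restrict_apply (hm s hs), Set.inter_comm]
  have hfin : ∫⁻ ω, T.indicator 1 ω ∂P ≠ ∞ := by
    rw [lintegral_indicator_one hT]
    exact measure_ne_top P T
  have hind : (fun ω => (T.indicator (1 : Ω → ℝ≥0∞) ω).toReal) = T.indicator fun _ => 1 := by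
    ext ω
    by_cases hω : ω ∈ T <;> simp [hω]
  rw [← hind]
  exact (hcond.fun_comp ENNReal.toReal).trans
    (toReal_condLExp m (measurable_one.indicator hT).aemeasurable hfin)

lemma toReal_ae_eq_condExp_indicator_of_preimage_pi {α ι F : Type*} {𝓑 : MeasurableSpace α}
    [MeasurableSpace F] {X : Ω → α} {Y : Ω → ι → F} (hX : Measurable X) (hY : Measurable Y)
    (hT : MeasurableSet T) {f : Ω → ℝ≥0∞}
    (hf : Measurable[𝓑.comap X ⊔ MeasurableSpace.pi.comap Y] f)
    (h : ∀ (B : Set α) (S : Finset ι) (D : ι → Set F), MeasurableSet B →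
      (∀ v, MeasurableSet (D v)) → ∫⁻ ω in X ⁻¹' B ∩ Y ⁻¹' (S : Set ι).pi D, f ω ∂P =
        P (X ⁻¹' B ∩ Y ⁻¹' (S : Set ι).pi D ∩ T)) :
    (fun ω => (f ω).toReal) =ᵐ[P]
      P[T.indicator (fun _ => (1 : ℝ)) | 𝓑.comap X ⊔ MeasurableSpace.pi.comap Y] := by
  let 𝓒 : Set (Set Ω) := Set.preimage X '' {B | MeasurableSet B}
  let 𝓓 : Set (Set Ω) := Set.preimage Y '' squareCylinders fun _ => {D | MeasurableSet D}
  have h𝓒 : Set.univ ∈ 𝓒 := ⟨Set.univ, .univ, rfl⟩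
  have h𝓓 : Set.univ ∈ 𝓓 := ⟨Set.univ, ⟨∅, fun _ => Set.univ, by simp, by simp⟩, rfl⟩
  have hgen : 𝓑.comap X ⊔ MeasurableSpace.pi.comap Y =
      MeasurableSpace.generateFrom (Set.image2 (· ∩ ·) 𝓒 𝓓) := by
    rw [generateFrom_image2_inter h𝓒 h𝓓, ← MeasurableSpace.comap_generateFrom,
      ← MeasurableSpace.comap_generateFrom, generateFrom_squareCylinders,
      MeasurableSpace.generateFrom_measurableSet]
  have hpi : IsPiSystem (Set.image2 (· ∩ ·) 𝓒 𝓓) :=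
    isPiSystem_image2_inter (MeasurableSpace.isPiSystem_measurableSet.comap X)
      ((isPiSystem_squareCylinders (fun _ => MeasurableSpace.isPiSystem_measurableSet)
        fun _ => MeasurableSet.univ).comap Y)
  refine toReal_ae_eq_condExp_indicator_of_isPiSystem (sup_le hX.comap_le hY.comap_le) hgen hpi
    ⟨_, h𝓒, _, h𝓓, Set.univ_inter _⟩ hT hf ?_
  rintro _ ⟨_, ⟨B, hB, rfl⟩, _, ⟨_, ⟨S, D, hD, rfl⟩, rfl⟩, rfl⟩
  exact h B S D hB fun v => hD v trivial

lemma bind_map_eq_of_ae_eq_condExp {α : Type*} [MeasurableSpace α] {X : Ω → α}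
    (hX : Measurable X) (hm : m ≤ mΩ) {κ : α → Measure α} (hκ : Measurable κ)
    [∀ x, IsFiniteMeasure (κ x)]
    (h : ∀ A, MeasurableSet A → (fun ω => (κ (X ω) A).toReal) =ᵐ[P]
      P[(X ⁻¹' A).indicator (fun _ => (1 : ℝ)) | m]) :
    (P.map X).bind κ = P.map X := by
  ext A hA
  have hint := setLIntegral_ofReal_of_ae_eq_condExp_indicator hm (hX hA) (h A hA) .univ
  rw [Measure.bind_apply hA hκ.aemeasurable,
    lintegral_map (Measure.measurable_measure.1 hκ A hA) hX, Measure.map_apply hX hA]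
  simpa using hint

end CondExp

section Bayes

variable {α β : Type*}

lemma measurableSpace_prod_mono_left {𝓑 mα : MeasurableSpace α} {mβ : MeasurableSpace β}
    (h𝓑 : 𝓑 ≤ mα) : 𝓑.prod mβ ≤ mα.prod mβ :=
  sup_le_sup (MeasurableSpace.comap_mono h𝓑) le_rfl

/-- The Bayesian update of the prior `μ` by the likelihood `f`: the measure with density `f` with
respect to `μ`, divided by its total mass. It is the zero measure if that mass is `0` or `∞`. -/
def bayesUpdate [MeasurableSpace α] (μ : Measure α) (f : α → ℝ≥0∞) : Measure α :=
  (μ.withDensity f Set.univ)⁻¹ • μ.withDensity f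

lemma bayesUpdate_apply [MeasurableSpace α] (μ : Measure α) (f : α → ℝ≥0∞) {A : Set α}
    (hA : MeasurableSet A) :
    bayesUpdate μ f A = (∫⁻ z, f z ∂μ)⁻¹ * ∫⁻ z in A, f z ∂μ := by
  simp only [bayesUpdate, Measure.smul_apply, smul_eq_mul, withDensity_apply f hA,
    withDensity_apply f .univ, Measure.restrict_univ]

lemma bayesUpdate_apply_mul_lintegral [MeasurableSpace α] {μ : Measure α} {f : α → ℝ≥0∞}
    (hf : ∫⁻ z, f z ∂μ ≠ ∞) {A : Set α} (hA : MeasurableSet A) :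
    bayesUpdate μ f A * ∫⁻ z, f z ∂μ = ∫⁻ z in A, f z ∂μ := by
  rw [bayesUpdate_apply μ f hA, mul_right_comm]
  by_cases hzero : ∫⁻ z, f z ∂μ = 0
  · have hA_zero : ∫⁻ z in A, f z ∂μ = 0 :=
      le_zero_iff.1 (hzero ▸ setLIntegral_le_lintegral A f)
    rw [hA_zero, mul_zero]
  · rw [ENNReal.inv_mul_cancel hzero hf, one_mul]

lemma measurable_lintegral_kernel_prodMk {γ : Type*} {mα : MeasurableSpace α}
    {mβ : MeasurableSpace β} {mγ : MeasurableSpace γ} (κ : Kernel α γ) [IsSFiniteKernel κ]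
    {f : γ × β → ℝ≥0∞} (hf : Measurable f) :
    Measurable fun p : α × β => ∫⁻ z, f (z, p.2) ∂κ p.1 :=
  Measurable.lintegral_kernel_prod_right (κ := κ.comap Prod.fst measurable_fst)
    (f := fun p z => f (z, p.2)) (by fun_prop)

lemma measurable_bayesUpdate_apply {γ : Type*} {mα : MeasurableSpace α}
    {mβ : MeasurableSpace β} {mγ : MeasurableSpace γ} (κ : Kernel α γ) [IsSFiniteKernel κ]
    {L : γ × β → ℝ≥0∞} (hL : Measurable L) {A : Set γ} (hA : MeasurableSet A) :
    Measurable fun p : α × β => bayesUpdate (κ p.1) (fun z => L (z, p.2)) A := by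
  simp only [bayesUpdate_apply _ _ hA, ← lintegral_indicator hA]
  exact (measurable_lintegral_kernel_prodMk κ hL).inv.mul
    (measurable_lintegral_kernel_prodMk κ (hL.indicator (measurable_fst hA)))

variable {𝓑 mα : MeasurableSpace α} {κ : Kernel[𝓑, mα] α α} {μ : Measure α}

lemma lintegral_mul_eq_lintegral_mul_lintegral_of_isProper (h𝓑 : 𝓑 ≤ mα) (hκ : κ.IsProper)
    (hμ : μ.bind κ = μ) {k h : α → ℝ≥0∞} (hk : Measurable[𝓑] k) (hh : Measurable h) :
    ∫⁻ x, k x * h x ∂μ = ∫⁻ x, k x * ∫⁻ z, h z ∂κ x ∂μ := by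
  calc ∫⁻ x, k x * h x ∂μ = ∫⁻ x, k x * h x ∂μ.bind κ := by rw [hμ]
    _ = ∫⁻ x, ∫⁻ z, k z * h z ∂κ x ∂μ :=
      Measure.lintegral_bind (κ.measurable.mono h𝓑 le_rfl).aemeasurable
        ((hk.mono h𝓑 le_rfl).mul hh).aemeasurable
    _ = ∫⁻ x, k x * ∫⁻ z, h z ∂κ x ∂μ := by simp only [hκ.lintegral_mul h𝓑 hh hk]

lemma bind_withDensity_eq_of_isProper (h𝓑 : 𝓑 ≤ mα) (hκ : κ.IsProper) (hμ : μ.bind κ = μ)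
    {k : α → ℝ≥0∞} (hk : Measurable[𝓑] k) :
    (μ.withDensity k).bind κ = μ.withDensity k := by
  ext A hA
  have hκm : Measurable κ := κ.measurable.mono h𝓑 le_rfl
  rw [Measure.bind_apply hA hκm.aemeasurable,
    lintegral_withDensity_eq_lintegral_mul _ (hk.mono h𝓑 le_rfl)
      (Measure.measurable_measure.1 hκm A hA), withDensity_apply _ hA, ← lintegral_indicator hA]
  have hpull := lintegral_mul_eq_lintegral_mul_lintegral_of_isProper h𝓑 hκ hμ hk
    (measurable_one.indicator hA : Measurable (A.indicator (1 : α → ℝ≥0∞)))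
  simp only [lintegral_indicator_one hA] at hpull
  simp only [Pi.mul_apply, ← hpull]
  refine lintegral_congr fun x => ?_
  by_cases hx : x ∈ A <;> simp [hx]

variable [mβ : MeasurableSpace β] {ν : Measure β} [SFinite μ] [SFinite ν]

lemma lintegral_prod_mul_eq_lintegral_mul_lintegral_of_isProper [IsSFiniteKernel κ]
    (h𝓑 : 𝓑 ≤ mα) (hκ : κ.IsProper) (hμ : μ.bind κ = μ) {k h : α × β → ℝ≥0∞}
    (hk : Measurable[𝓑.prod mβ] k) (hh : Measurable h) :
    ∫⁻ p, k p * h p ∂μ.prod ν = ∫⁻ p, k p * ∫⁻ z, h (z, p.2) ∂κ p.1 ∂μ.prod ν := by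
  have hprod : 𝓑.prod mβ ≤ mα.prod mβ := measurableSpace_prod_mono_left h𝓑
  have hk' : Measurable k := hk.mono hprod le_rfl
  have hκh : Measurable fun p : α × β => ∫⁻ z, h (z, p.2) ∂κ p.1 :=
    (measurable_lintegral_kernel_prodMk κ hh).mono hprod le_rfl
  rw [lintegral_prod_symm _ (hk'.fun_mul hh).aemeasurable,
    lintegral_prod_symm _ (hk'.fun_mul hκh).aemeasurable]
  exact lintegral_congr fun y => lintegral_mul_eq_lintegral_mul_lintegral_of_isProper h𝓑 hκ hμ
    (hk.comp (measurable_prodMk_right (m := 𝓑))) (hh.comp measurable_prodMk_right)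

lemma ae_lintegral_kernel_lt_top_of_isProper [IsSFiniteKernel κ] (h𝓑 : 𝓑 ≤ mα)
    (hκ : κ.IsProper) (hμ : μ.bind κ = μ) {L : α × β → ℝ≥0∞} (hL : Measurable L)
    (hfin : ∫⁻ p, L p ∂μ.prod ν ≠ ∞) :
    ∀ᵐ p ∂μ.prod ν, ∫⁻ z, L (z, p.2) ∂κ p.1 < ∞ := by
  have hprod : 𝓑.prod mβ ≤ mα.prod mβ := measurableSpace_prod_mono_left h𝓑
  refine ae_lt_top ((measurable_lintegral_kernel_prodMk κ hL).mono hprod le_rfl) ?_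
  have hmass := lintegral_prod_mul_eq_lintegral_mul_lintegral_of_isProper (ν := ν) h𝓑 hκ hμ
    (measurable_const (a := 1)) hL
  simp only [one_mul] at hmass
  rwa [← hmass]

theorem setLIntegral_bayesUpdate_of_isProper [IsSFiniteKernel κ] (h𝓑 : 𝓑 ≤ mα)
    (hκ : κ.IsProper) (hμ : μ.bind κ = μ) {L : α × β → ℝ≥0∞} (hL : Measurable L)
    (hfin : ∫⁻ p, L p ∂μ.prod ν ≠ ∞) {A : Set α} (hA : MeasurableSet A) {C : Set (α × β)}
    (hC : MeasurableSet[𝓑.prod mβ] C) :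
    ∫⁻ p in C, bayesUpdate (κ p.1) (fun z => L (z, p.2)) A ∂(μ.prod ν).withDensity L =
      (μ.prod ν).withDensity L (C ∩ Prod.fst ⁻¹' A) := by
  have hprod : 𝓑.prod mβ ≤ mα.prod mβ := measurableSpace_prod_mono_left h𝓑
  have hC' : MeasurableSet C := hprod C hC
  let R : α × β → ℝ≥0∞ := fun p => bayesUpdate (κ p.1) (fun z => L (z, p.2)) A
  have hR : Measurable[𝓑.prod mβ] R := measurable_bayesUpdate_apply κ hL hA
  have hA' : MeasurableSet (Prod.fst ⁻¹' A : Set (α × β)) := measurable_fst hA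
  calc ∫⁻ p in C, R p ∂(μ.prod ν).withDensity L
      = ∫⁻ p, C.indicator R p * L p ∂μ.prod ν := by
        rw [setLIntegral_withDensity_eq_setLIntegral_mul _ hL (hR.mono hprod le_rfl) hC',
          ← lintegral_indicator hC']
        refine lintegral_congr fun p => ?_
        by_cases hpC : p ∈ C <;> simp [hpC, mul_comm]
    _ = ∫⁻ p, C.indicator R p * ∫⁻ z, L (z, p.2) ∂κ p.1 ∂μ.prod ν :=
        lintegral_prod_mul_eq_lintegral_mul_lintegral_of_isProper h𝓑 hκ hμ (hR.indicator hC) hL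
    _ = ∫⁻ p, C.indicator (fun _ => 1) p * ∫⁻ z in A, L (z, p.2) ∂κ p.1 ∂μ.prod ν := by
        refine lintegral_congr_ae ?_
        filter_upwards [ae_lintegral_kernel_lt_top_of_isProper h𝓑 hκ hμ hL hfin] with p hp
        by_cases hpC : p ∈ C
        · simp [hpC, R, bayesUpdate_apply_mul_lintegral hp.ne hA]
        · simp [hpC]
    _ = ∫⁻ p, C.indicator (fun _ => 1) p * (Prod.fst ⁻¹' A).indicator L p ∂μ.prod ν := by
        rw [lintegral_prod_mul_eq_lintegral_mul_lintegral_of_isProper h𝓑 hκ hμ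
          ((measurable_const (a := 1)).indicator hC) (hL.indicator hA')]
        simp only [← lintegral_indicator hA]
        rfl
    _ = (μ.prod ν).withDensity L (C ∩ Prod.fst ⁻¹' A) := by
        rw [withDensity_apply _ (hC'.inter hA'), ← lintegral_indicator (hC'.inter hA')]
        simp only [← Set.indicator_indicator]
        refine lintegral_congr fun p => ?_
        by_cases hpC : p ∈ C <;> simp [hpC]

end Bayes

section Observations

variable {ι E F Ω : Type*} [MeasurableSpace F] {g : ι → E → F → ℝ} {φ : Measure F}

/-- The likelihood of the observations `p.2` at the sites of `V` given the configuration `p.1`. -/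
def likelihood (g : ι → E → F → ℝ) (V : Finset ι) (p : (ι → E) × (V → F)) : ℝ≥0∞ :=
  ENNReal.ofReal (∏ v : V, g v (p.1 v) (p.2 v))

/-- The probability, given the configuration `x`, that the observation at each site `v ∈ S` falls
in `D v`. -/
def cylinderProb (g : ι → E → F → ℝ) (φ : Measure F) (S : Finset ι) (D : ι → Set F)
    (x : ι → E) : ℝ≥0∞ :=
  ENNReal.ofReal (∏ v ∈ S, ∫ y in D v, g v (x v) y ∂φ)

lemma cylinderProb_congr {S : Finset ι} {D D' : ι → Set F} (h : ∀ v ∈ S, D v = D' v) :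
    cylinderProb g φ S D = cylinderProb g φ S D' := by
  ext x
  exact congrArg ENNReal.ofReal (Finset.prod_congr rfl fun v hv => by rw [h v hv])

lemma cylinderProb_union [DecidableEq ι] (hg : ∀ v e y, 0 ≤ g v e y) {S V : Finset ι}
    (hSV : Disjoint S V) (D : ι → Set F) :
    cylinderProb g φ (S ∪ V) D = cylinderProb g φ S D * cylinderProb g φ V D := by
  ext x
  rw [cylinderProb, Finset.prod_union hSV, ENNReal.ofReal_mul
    (Finset.prod_nonneg fun v _ => integral_nonneg (hg v (x v)))]
  rfl

lemma setLIntegral_likelihood [SigmaFinite φ] (hg : ∀ v e y, 0 ≤ g v e y)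
    (hgi : ∀ v e, Integrable (g v e) φ) (V : Finset ι) (D : ι → Set F) (x : ι → E) :
    ∫⁻ y in Set.univ.pi fun v : V => D v, likelihood g V (x, y) ∂Measure.pi (fun _ => φ) =
      cylinderProb g φ V D x := by
  simp only [likelihood, cylinderProb]
  rw [Measure.restrict_pi_pi, ← ofReal_integral_eq_lintegral_ofReal
    (Integrable.fintype_prod fun v : V => (hgi v (x v)).integrableOn)
    (ae_of_all _ fun y => Finset.prod_nonneg fun v _ => hg _ _ _),
    integral_fintype_prod_eq_prod (fun v : V => g v (x v)),
    Finset.prod_coe_sort V fun v => ∫ y in D v, g v (x v) y ∂φ]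

variable [MeasurableSpace E] {mΩ : MeasurableSpace Ω} {P : Measure Ω} {X : Ω → ι → E}
  {Y : Ω → ι → F}

/-- The `Y v` are observations of the field `X`, conditionally independent given `X`, where `Y v`
has conditional density `g v (X v)` with respect to `φ`. This is expressed through the conditional
probabilities of the finite-dimensional cylinder events. -/
def IsObservation (P : Measure Ω) (X : Ω → ι → E) (Y : Ω → ι → F) (g : ι → E → F → ℝ)
    (φ : Measure F) : Prop :=
  ∀ (S : Finset ι) (D : ι → Set F), (∀ v, MeasurableSet (D v)) →
    P[(Y ⁻¹' (S : Set ι).pi D).indicator (fun _ => (1 : ℝ)) |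
        MeasurableSpace.comap X inferInstance] =ᵐ[P]
      fun ω => ∏ v ∈ S, ∫ y in D v, g v (X ω v) y ∂φ

lemma measurable_likelihood (hgm : ∀ v, Measurable (Function.uncurry (g v))) (V : Finset ι) :
    Measurable (likelihood g V) :=
  ENNReal.measurable_ofReal.comp <| Finset.measurable_prod _ fun v _ =>
    (hgm v).comp (f := fun p : (ι → E) × (V → F) => (p.1 v, p.2 v)) (by fun_prop)

lemma measurable_cylinderProb [SFinite φ] (hgm : ∀ v, Measurable (Function.uncurry (g v)))
    {S : Finset ι} {T : Set ι} (hST : (S : Set ι) ⊆ T) (D : ι → Set F) :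
    Measurable[cylinderEvents T] (cylinderProb g φ S D) := by
  refine ENNReal.measurable_ofReal.comp (Finset.measurable_prod _ fun v hv => ?_)
  have hv_int : Measurable fun e => ∫ y in D v, g v e y ∂φ :=
    (hgm v).stronglyMeasurable.integral_prod_right.measurable
  exact hv_int.comp (measurable_cylinderEvent_apply (hST hv))

variable [IsFiniteMeasure P]

lemma IsObservation.measure_inter_preimage_pi [SFinite φ] (hobs : IsObservation P X Y g φ)
    (hgm : ∀ v, Measurable (Function.uncurry (g v))) (hX : Measurable X) (hY : Measurable Y)
    {B : Set (ι → E)} (hB : MeasurableSet B) (S : Finset ι) {D : ι → Set F}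
    (hD : ∀ v, MeasurableSet (D v)) :
    P (X ⁻¹' B ∩ Y ⁻¹' (S : Set ι).pi D) = ∫⁻ x in B, cylinderProb g φ S D x ∂P.map X := by
  have hcyl : MeasurableSet ((S : Set ι).pi D) := .pi S.countable_toSet fun v _ => hD v
  rw [setLIntegral_map hB ((measurable_cylinderProb hgm subset_rfl D).mono
    cylinderEvents_le_pi le_rfl) hX]
  exact (setLIntegral_ofReal_of_ae_eq_condExp_indicator hX.comap_le (hY hcyl) (hobs S D hD).symm
    ⟨B, hB, rfl⟩).symm

theorem IsObservation.map_restrict_eq_withDensity [SigmaFinite φ] (hobs : IsObservation P X Y g φ)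
    (hgm : ∀ v, Measurable (Function.uncurry (g v))) (hg : ∀ v e y, 0 ≤ g v e y)
    (hgi : ∀ v e, Integrable (g v e) φ) (hX : Measurable X) (hY : Measurable Y)
    {S V : Finset ι} (hSV : Disjoint S V) {D : ι → Set F} (hD : ∀ v, MeasurableSet (D v)) :
    (P.restrict (Y ⁻¹' (S : Set ι).pi D)).map (fun ω => (X ω, V.restrict (Y ω))) =
      (((P.map X).withDensity (cylinderProb g φ S D)).prod
        (Measure.pi fun _ : V => φ)).withDensity (likelihood g V) := by
  classical
  have hZ : Measurable fun ω => (X ω, V.restrict (Y ω)) := by fun_prop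
  have hprob : ∀ (T : Finset ι) (D : ι → Set F), Measurable (cylinderProb g φ T D) :=
    fun T D => (measurable_cylinderProb hgm subset_rfl D).mono cylinderEvents_le_pi le_rfl
  refine measure_ext_of_prod_univ_pi fun B D' hB hD' => ?_
  have hpi : MeasurableSet (Set.univ.pi D') := .univ_pi hD'
  obtain ⟨D'', hD'', rfl, hS⟩ : ∃ D'' : ι → Set F, (∀ v, MeasurableSet (D'' v)) ∧
      D' = (fun v : V => D'' v) ∧ ∀ v ∈ S, D'' v = D v := by
    refine ⟨fun v => if hv : v ∈ V then D' ⟨v, hv⟩ else D v, fun v => ?_, by simp,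
      fun v hv => by simp [Finset.disjoint_left.1 hSV hv]⟩
    dsimp only
    split_ifs with hv
    exacts [hD' _, hD v]
  have hevent : (fun ω => (X ω, V.restrict (Y ω))) ⁻¹' (B ×ˢ Set.univ.pi fun v : V => D'' v) ∩
      Y ⁻¹' (S : Set ι).pi D = X ⁻¹' B ∩ Y ⁻¹' ((S ∪ V : Finset ι) : Set ι).pi D'' := by
    ext ω
    have hS' : (∀ v ∈ S, Y ω v ∈ D'' v) ↔ ∀ v ∈ S, Y ω v ∈ D v :=
      forall₂_congr fun v hv => by rw [hS v hv]
    simp only [Set.mem_inter_iff, Set.mem_preimage, Set.mem_prod, Set.mem_pi, Set.mem_univ,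
      true_imp_iff, Finset.restrict, Subtype.forall, Finset.mem_coe, Finset.mem_union, or_imp,
      forall_and, hS']
    tauto
  calc _ = P (X ⁻¹' B ∩ Y ⁻¹' ((S ∪ V : Finset ι) : Set ι).pi D'') := by
        rw [Measure.map_apply hZ (hB.prod hpi), Measure.restrict_apply (hZ (hB.prod hpi)), hevent]
    _ = ∫⁻ x in B, cylinderProb g φ V D'' x ∂(P.map X).withDensity (cylinderProb g φ S D) := by
        rw [hobs.measure_inter_preimage_pi hgm hX hY hB _ hD'', cylinderProb_union hg hSV,
          cylinderProb_congr hS,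
          setLIntegral_withDensity_eq_setLIntegral_mul _ (hprob S D) (hprob V D'') hB]
    _ = _ := by
        rw [withDensity_apply _ (hB.prod hpi), ← Measure.prod_restrict,
          lintegral_prod _ (measurable_likelihood hgm V).aemeasurable]
        simp only [setLIntegral_likelihood hg hgi]

variable {V : Finset ι}
  {κ : Kernel[cylinderEvents (V : Set ι)ᶜ, MeasurableSpace.pi] (ι → E) (ι → E)}
  [IsSFiniteKernel κ]

lemma IsObservation.setLIntegral_bayesUpdate_of_disjoint [SigmaFinite φ]
    (hobs : IsObservation P X Y g φ)
    (hgm : ∀ v, Measurable (Function.uncurry (g v))) (hg : ∀ v e y, 0 ≤ g v e y)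
    (hgi : ∀ v e, Integrable (g v e) φ) (hX : Measurable X) (hY : Measurable Y)
    (hκ : κ.IsProper) (hinv : (P.map X).bind κ = P.map X) {A : Set (ι → E)}
    (hA : MeasurableSet A) {C : Set ((ι → E) × (V → F))}
    (hC : MeasurableSet[(cylinderEvents (V : Set ι)ᶜ).prod MeasurableSpace.pi] C)
    {S : Finset ι} (hSV : Disjoint S V) {D : ι → Set F} (hD : ∀ v, MeasurableSet (D v)) :
    ∫⁻ ω in (fun ω => (X ω, V.restrict (Y ω))) ⁻¹' C ∩ Y ⁻¹' (S : Set ι).pi D,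
        bayesUpdate (κ (X ω)) (fun z => likelihood g V (z, V.restrict (Y ω))) A ∂P =
      P ((fun ω => (X ω, V.restrict (Y ω))) ⁻¹' C ∩ Y ⁻¹' (S : Set ι).pi D ∩ X ⁻¹' A) := by
  have hle : cylinderEvents (V : Set ι)ᶜ ≤ (MeasurableSpace.pi : MeasurableSpace (ι → E)) :=
    cylinderEvents_le_pi
  have hC' : MeasurableSet C := measurableSpace_prod_mono_left hle C hC
  have hCA : MeasurableSet (C ∩ Prod.fst ⁻¹' A) := hC'.inter (measurable_fst hA)
  have hZ : Measurable fun ω => (X ω, V.restrict (Y ω)) := by fun_prop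
  have hL : Measurable (likelihood g V) := measurable_likelihood hgm V
  have hR : Measurable fun p : (ι → E) × (V → F) =>
      bayesUpdate (κ p.1) (fun z => likelihood g V (z, p.2)) A :=
    (measurable_bayesUpdate_apply κ hL hA).mono (measurableSpace_prod_mono_left hle) le_rfl
  have hlaw := hobs.map_restrict_eq_withDensity hgm hg hgi hX hY hSV hD
  have hSVc : (S : Set ι) ⊆ (V : Set ι)ᶜ :=
    Set.subset_compl_iff_disjoint_right.2 (Finset.disjoint_coe.2 hSV)
  -- Observations outside `V` weight the law of the field by a function of the field outside `V`.
  have hinv' := bind_withDensity_eq_of_isProper hle hκ hinv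
    (measurable_cylinderProb (φ := φ) hgm hSVc D)
  have hfin : ∫⁻ p, likelihood g V p ∂((P.map X).withDensity (cylinderProb g φ S D)).prod
      (Measure.pi fun _ => φ) ≠ ∞ := by
    rw [← setLIntegral_univ, ← withDensity_apply _ .univ, ← hlaw]
    exact measure_ne_top _ _
  have hbayes := setLIntegral_bayesUpdate_of_isProper hle hκ hinv' hL hfin hA hC
  rwa [← hlaw, setLIntegral_map hC' hR hZ, Measure.restrict_restrict (hZ hC'),
    Measure.map_apply hZ hCA, Measure.restrict_apply (hZ hCA), Set.preimage_inter,
    Set.inter_right_comm] at hbayes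

lemma IsObservation.setLIntegral_bayesUpdate [SigmaFinite φ] (hobs : IsObservation P X Y g φ)
    (hgm : ∀ v, Measurable (Function.uncurry (g v))) (hg : ∀ v e y, 0 ≤ g v e y)
    (hgi : ∀ v e, Integrable (g v e) φ) (hX : Measurable X) (hY : Measurable Y)
    (hκ : κ.IsProper) (hinv : (P.map X).bind κ = P.map X) {A B : Set (ι → E)}
    (hA : MeasurableSet A) (hB : MeasurableSet[cylinderEvents (V : Set ι)ᶜ] B) (S : Finset ι)
    {D : ι → Set F} (hD : ∀ v, MeasurableSet (D v)) :
    ∫⁻ ω in X ⁻¹' B ∩ Y ⁻¹' (S : Set ι).pi D,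
        bayesUpdate (κ (X ω)) (fun z => likelihood g V (z, V.restrict (Y ω))) A ∂P =
      P (X ⁻¹' B ∩ Y ⁻¹' (S : Set ι).pi D ∩ X ⁻¹' A) := by
  classical
  let C : Set ((ι → E) × (V → F)) := B ×ˢ {v : V | (v : ι) ∈ S}.pi fun v => D v
  have hC : MeasurableSet[(cylinderEvents (V : Set ι)ᶜ).prod MeasurableSpace.pi] C :=
    @MeasurableSet.prod _ _ (_) (_) _ _ hB (.pi (Set.to_countable _) fun v _ => hD v)
  have hsplit : X ⁻¹' B ∩ Y ⁻¹' (S : Set ι).pi D =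
      (fun ω => (X ω, V.restrict (Y ω))) ⁻¹' C ∩ Y ⁻¹' ((S \ V : Finset ι) : Set ι).pi D := by
    ext ω
    simp only [C, Set.mem_inter_iff, Set.mem_preimage, Set.mem_prod, Set.mem_pi,
      Set.mem_ofPred_eq, Finset.restrict, Subtype.forall, Finset.mem_coe, Finset.mem_sdiff]
    grind
  rw [hsplit]
  exact hobs.setLIntegral_bayesUpdate_of_disjoint hgm hg hgi hX hY hκ hinv hA hC
    Finset.sdiff_disjoint hD

theorem IsObservation.toReal_bayesUpdate_ae_eq_condExp [SigmaFinite φ]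
    (hobs : IsObservation P X Y g φ)
    (hgm : ∀ v, Measurable (Function.uncurry (g v))) (hg : ∀ v e y, 0 ≤ g v e y)
    (hgi : ∀ v e, Integrable (g v e) φ) (hX : Measurable X) (hY : Measurable Y)
    (hκ : κ.IsProper) (hinv : (P.map X).bind κ = P.map X) {A : Set (ι → E)}
    (hA : MeasurableSet A) :
    (fun ω => (bayesUpdate (κ (X ω)) (fun z => likelihood g V (z, V.restrict (Y ω))) A).toReal)
      =ᵐ[P] P[(X ⁻¹' A).indicator (fun _ => (1 : ℝ)) |
        (cylinderEvents (V : Set ι)ᶜ).comap X ⊔ MeasurableSpace.pi.comap Y] := by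
  have hXV : Measurable[_, cylinderEvents (V : Set ι)ᶜ] X := hX.mono le_rfl cylinderEvents_le_pi
  have hZ : Measurable[(cylinderEvents (V : Set ι)ᶜ).comap X ⊔ MeasurableSpace.pi.comap Y,
      (cylinderEvents (V : Set ι)ᶜ).prod MeasurableSpace.pi] fun ω => (X ω, V.restrict (Y ω)) :=
    @Measurable.prodMk _ _ _ (_) (_) (_) _ _
      (Measurable.of_comap_le le_sup_left)
      ((Finset.measurable_restrict V).comp (Measurable.of_comap_le le_sup_right))
  have hR : Measurable[(cylinderEvents (V : Set ι)ᶜ).prod MeasurableSpace.pi]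
      fun p : (ι → E) × (V → F) => bayesUpdate (κ p.1) (fun z => likelihood g V (z, p.2)) A :=
    measurable_bayesUpdate_apply κ (measurable_likelihood hgm V) hA
  exact toReal_ae_eq_condExp_indicator_of_preimage_pi hXV hY (hX hA) (fun _ ht => hZ (hR ht))
    fun B S D hB hD => hobs.setLIntegral_bayesUpdate hgm hg hgi hX hY hκ hinv hA hB S hD

end Observations

section Specification

lemma pi_eq_cylσ_sup_cylσ_compl (S : Set (Site d)) :
    (MeasurableSpace.pi : MeasurableSpace (Conf E d)) = cylσ E S ⊔ cylσ E Sᶜ := by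
  refine le_antisymm (iSup_le fun v => ?_) (sup_le cylinderEvents_le_pi cylinderEvents_le_pi)
  by_cases hv : v ∈ S
  · exact le_sup_of_le_left (le_iSup₂_of_le v hv le_rfl)
  · exact le_sup_of_le_right (le_iSup₂_of_le v hv le_rfl)

lemma bdry_subset_compl (V : Finset (Site d)) : bdry V ⊆ (V : Set (Site d))ᶜ :=
  fun _ hw => hw.1

lemma outsideσ_eq_comap {Ω : Type*} [MeasurableSpace Ω] (X : Ω → Conf E d)
    (V : Finset (Site d)) : outsideσ X V = (cylσ E (V : Set (Site d))ᶜ).comap X := by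
  simp only [outsideσ, cylσ, MeasurableSpace.comap_iSup, MeasurableSpace.comap_comp]
  rfl

lemma condKer_eq_bayesUpdate {F : Type*}
    (γ : Finset (Site d) → Conf E d → Measure (Conf E d)) (g : Site d → E → F → ℝ)
    (y : Site d → F) (V : Finset (Site d)) (x : Conf E d) :
    condKer γ g y V x = bayesUpdate (γ V x) fun z => likelihood g V (z, V.restrict y) := by
  have hprod : (fun z : Conf E d => ENNReal.ofReal (∏ v ∈ V, g v (z v) (y v))) =
      fun z => likelihood g V (z, V.restrict y) :=
    funext fun z => congrArg ENNReal.ofReal (Finset.prod_coe_sort V fun v => g v (z v) (y v)).symm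
  simp only [condKer, bayesUpdate, hprod]

namespace IsSpecification

variable {γ : Finset (Site d) → Conf E d → Measure (Conf E d)}

lemma inter_eq_indicator_mul (hγ : IsSpecification γ) (V : Finset (Site d))
    (A : Set (Conf E d)) {B : Set (Conf E d)} (hB : MeasurableSet[cylσ E (V : Set (Site d))ᶜ] B)
    (x : Conf E d) : γ V x (A ∩ B) = B.indicator 1 x * γ V x A := by
  have := hγ.prob V x
  have hBx := hγ.proper V B hB x
  by_cases hx : x ∈ B
  · rw [Set.indicator_of_mem hx] at hBx ⊢
    have hB_ae : ∀ᵐ z ∂γ V x, z ∈ B := (prob_compl_eq_zero_iff (cylinderEvents_le_pi B hB)).2 hBx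
    rw [Pi.one_apply, one_mul, Set.inter_comm, Measure.measure_inter_eq_of_ae hB_ae]
  · rw [Set.indicator_of_notMem hx] at hBx
    rw [Set.indicator_of_notMem hx, zero_mul]
    exact measure_mono_null Set.inter_subset_right hBx

lemma measurable_cylσ_compl (hγ : IsSpecification γ) (V : Finset (Site d)) :
    Measurable[cylσ E (V : Set (Site d))ᶜ] (γ V) := by
  have := hγ.prob V
  refine Measurable.measure_of_isPiSystem_of_isProbabilityMeasure
    ((pi_eq_cylσ_sup_cylσ_compl V).trans (generateFrom_image2_inter_measurableSet _ _).symm)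
    (isPiSystem_image2_inter (@MeasurableSpace.isPiSystem_measurableSet _ (_))
      (@MeasurableSpace.isPiSystem_measurableSet _ (_))) ?_
  rintro _ ⟨A, hA, B, hB, rfl⟩
  simp only [hγ.inter_eq_indicator_mul V A hB]
  exact Measurable.mul (Measurable.indicator (@measurable_const _ _ _ (_) 1) hB)
    ((hγ.bdryMeas V A hA).mono (cylinderEvents_mono (bdry_subset_compl V)) le_rfl)

/-- The kernel `γ_V` of a specification, regarded as a kernel from the configurations outside `V`:
its source carries the σ-algebra `σ(X_{V^c})`. -/
def toKernel (hγ : IsSpecification γ) (V : Finset (Site d)) :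
    Kernel[cylinderEvents (V : Set (Site d))ᶜ, MeasurableSpace.pi] (Conf E d) (Conf E d) :=
  @Kernel.mk _ _ (_) _ (γ V) (hγ.measurable_cylσ_compl V)

instance isMarkovKernel_toKernel (hγ : IsSpecification γ) (V : Finset (Site d)) :
    IsMarkovKernel (hγ.toKernel V) :=
  ⟨hγ.prob V⟩

lemma isProper_toKernel (hγ : IsSpecification γ) (V : Finset (Site d)) :
    (hγ.toKernel V).IsProper :=
  (Kernel.isProper_iff_inter_eq_indicator_mul cylinderEvents_le_pi).2 fun A _ _ hB x =>
    hγ.inter_eq_indicator_mul V A hB x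

end IsSpecification

end Specification

theorem statement14_general {F : Type*} [MeasurableSpace F] {Ω : Type*} [MeasurableSpace Ω]
    (P : Measure Ω) [IsFiniteMeasure P]
    (γ : Finset (Site d) → Conf E d → Measure (Conf E d)) (hγ : IsSpecification γ)
    (φ : Measure F) [SigmaFinite φ]
    (g : Site d → E → F → ℝ) (hgm : ∀ v, Measurable (Function.uncurry (g v)))
    (hg : ∀ v e y, 0 ≤ g v e y) (hgint : ∀ v e, ∫ y, g v e y ∂φ = 1)
    (X : Ω → Conf E d) (hX : Measurable X) (V : Finset (Site d))
    (hXspec : ∀ A : Set (Conf E d), MeasurableSet A →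
      (fun ω => (γ V (X ω) A).toReal) =ᵐ[P]
        P[(X ⁻¹' A).indicator (fun _ => (1 : ℝ)) | outsideσ X V])
    (Y : Ω → Site d → F) (hY : Measurable Y) (hobs : IsObservation P X Y g φ)
    (A : Set (Conf E d)) (hA : MeasurableSet A) :
    (fun ω => (condKer γ g (Y ω) V (X ω) A).toReal) =ᵐ[P]
      P[(X ⁻¹' A).indicator (fun _ => (1 : ℝ)) |
        outsideσ X V ⊔ MeasurableSpace.comap Y inferInstance] := by
  have := hγ.prob V
  have hgi : ∀ v e, Integrable (g v e) φ := fun v e =>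
    .of_integral_ne_zero (by simp [hgint v e])
  have houtside : outsideσ X V ≤ (inferInstance : MeasurableSpace Ω) := by
    rw [outsideσ_eq_comap]
    exact (MeasurableSpace.comap_mono cylinderEvents_le_pi).trans hX.comap_le
  have hinv : (P.map X).bind (hγ.toKernel V) = P.map X :=
    bind_map_eq_of_ae_eq_condExp (κ := γ V) hX houtside
      (Measure.measurable_of_measurable_coe _ (hγ.kernel V)) hXspec
  simp only [condKer_eq_bayesUpdate, outsideσ_eq_comap]
  exact hobs.toReal_bayesUpdate_ae_eq_condExp hgm hg hgi hX hY (hγ.isProper_toKernel V) hinv hA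

/-- **Proposition 5.5(2).**  For a hidden Markov random field with local nondegenerate
observations, `γ_V^Y(X, A)` is a version of `P[X ∈ A | X_{V^c}, Y]`. -/
theorem statement14 [Fintype E] {F : Type*} [MeasurableSpace F] [StandardBorelSpace F]
    {Ω : Type*} [MeasurableSpace Ω] (P : Measure Ω) [IsProbabilityMeasure P]
    (γ : Finset (Site d) → Conf E d → Measure (Conf E d)) (hγ : IsSpecification γ)
    (φ : Measure F) [SigmaFinite φ]
    (g : Site d → E → F → ℝ) (hgm : ∀ v, Measurable (Function.uncurry (g v)))
    (hgpos : ∀ v e y, 0 < g v e y) (hgint : ∀ v e, ∫ y, g v e y ∂φ = 1)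
    (X : Ω → Conf E d) (hXm : Measurable X)
    (hXspec : ∀ (V : Finset (Site d)) (A : Set (Conf E d)), MeasurableSet A →
      (fun ω => (γ V (X ω) A).toReal) =ᵐ[P]
        P[(fun ω => A.indicator (fun _ => (1 : ℝ)) (X ω))|outsideσ X V])
    (Y : Ω → Site d → F) (hYm : Measurable Y)
    (hobs : ∀ (S : Finset (Site d)) (B : Site d → Set F), (∀ v, MeasurableSet (B v)) →
      P[(fun ω => Set.indicator {ω' | ∀ v ∈ S, Y ω' v ∈ B v} (fun _ => (1 : ℝ)) ω)|
          MeasurableSpace.comap X inferInstance] =ᵐ[P]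
        fun ω => ∏ v ∈ S, ∫ y in B v, g v (X ω v) y ∂φ) :
    ∀ (V : Finset (Site d)) (A : Set (Conf E d)), MeasurableSet A →
      (fun ω => (condKer γ g (Y ω) V (X ω) A).toReal) =ᵐ[P]
        P[(fun ω => A.indicator (fun _ => (1 : ℝ)) (X ω))|
          outsideσ X V ⊔ MeasurableSpace.comap Y inferInstance] :=
  fun V A hA => statement14_general P γ hγ φ g hgm (fun v e y => (hgpos v e y).le)
    hgint X hXm V (hXspec V) Y hYm hobs A hA

end RandomField
end
end

section
/- The pair (X, Y) is conditionally mixing if and only if for almost every y under the law of Y, the conditional measure P^y is mixing, i.e., for every finite V ⊂ ℤ^d and every measurable A ⊆ Ω, E^{P^y}| P^y[X_V ∈ A | σ(X_w : w ∉ W)] − P^y[X_V ∈ A] | → 0 along the net of finite W ⊂ ℤ^d directed by inclusion. -/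
open MeasureTheory Filter

noncomputable section

namespace RandomField

variable {E : Type*} [MeasurableSpace E] {d : ℕ}

/-- Mixing of a measure `μ` on `E^{ℤ^d}`:
`E|μ[X_V ∈ A | X_{W^c}] − μ[X_V ∈ A]| → 0` along the net of finite `W` directed by
inclusion, for every finite `V` and `A ∈ σ(X_V)`. -/
def MeasMixing (μ : Measure (Conf E d)) : Prop :=
  ∀ (V : Finset (Site d)) (A : Set (Conf E d)),
    MeasurableSet[cylσ E (↑V : Set (Site d))] A →
    Tendsto (fun W : Finset (Site d) =>
        ∫ z, |(μ[A.indicator (fun _ => (1 : ℝ))|cylσ E ((↑W : Set (Site d))ᶜ)]) z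
            - (μ A).toReal| ∂μ)
      atTop (nhds 0)

/-- Conditional mixing of the pair `(X, Y)`:
`E|P[X_V ∈ A | X_{W^c}, Y] − P[X_V ∈ A | Y]| → 0` along the net of finite `W` directed by
inclusion, for every finite `V` and `A ∈ σ(X_V)`. -/
def CondMixing {Ω : Type*} [MeasurableSpace Ω] {F : Type*} [MeasurableSpace F]
    (P : Measure Ω) (X : Ω → Conf E d) (Y : Ω → Site d → F) : Prop :=
  ∀ (V : Finset (Site d)) (A : Set (Conf E d)),
    MeasurableSet[cylσ E (↑V : Set (Site d))] A →
    Tendsto (fun W : Finset (Site d) =>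
        ∫ ω, |(P[(fun ω' => A.indicator (fun _ => (1 : ℝ)) (X ω'))|
                  outsideσ X W ⊔ MeasurableSpace.comap Y inferInstance]) ω
            - (P[(fun ω' => A.indicator (fun _ => (1 : ℝ)) (X ω'))|
                  MeasurableSpace.comap Y inferInstance]) ω| ∂P)
      atTop (nhds 0)

/-!
The joint law of `(Y, X)` is the composition product of the law of `Y` with the kernel
`κ y = P^y`. Conditional expectations disintegrate along it: if `m` is a countably generated
σ-algebra on the space of `X`, then for almost every `y` the section at `y` of the conditional
expectation given `σ(Y) ⊗ m` is the conditional expectation given `m` under `κ y`. Taking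
`m = σ(X_w : w ∉ W)` and `m = ⊥`, the quantity in the definition of conditional mixing becomes the
average over `y` of the quantity in the definition of mixing of `κ y`. The latter is nonnegative
and, by Jensen's inequality, decreasing in `W`, so its average tends to zero exactly when it tends
to zero for almost every `y`. A single null set of `y` serves all events, since for finite `E` each
`σ(X_V)` has only countably many.
-/

open ProbabilityTheory Topology

section CondExp

variable {Ω β G : Type*} {mΩ : MeasurableSpace Ω} {m m' mβ : MeasurableSpace β}
  {P : Measure Ω} {μ : Measure β}

/-- The `L¹(μ)` distance between the conditional expectations of `f` given `m` and given `m'`.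
For a probability measure `μ[f | ⊥]` is the mean of `f`, so both notions of mixing assert that such
distances vanish in the limit. -/
def condExpL1Dist (μ : Measure β) (f : β → ℝ) (m m' : MeasurableSpace β) : ℝ :=
  ∫ b, |μ[f | m] b - μ[f | m'] b| ∂μ

lemma condExpL1Dist_nonneg (f : β → ℝ) : 0 ≤ condExpL1Dist μ f m m' :=
  integral_nonneg fun _ ↦ abs_nonneg _

variable [IsFiniteMeasure P] [IsFiniteMeasure μ]
  [NormedAddCommGroup G] [NormedSpace ℝ G] [CompleteSpace G]

lemma condExp_map_comp_ae_eq {T : Ω → β} (hT : Measurable T) (hm : m ≤ mβ) {f : β → G}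
    (hf : Integrable f (P.map T)) :
    (P.map T)[f | m] ∘ T =ᵐ[P] P[f ∘ T | m.comap T] := by
  have hmT : m.comap T ≤ mΩ := (MeasurableSpace.comap_mono hm).trans hT.comap_le
  have hgT : Integrable ((P.map T)[f | m] ∘ T) P := integrable_condExp.comp_measurable hT
  refine ae_eq_condExp_of_forall_setIntegral_eq hmT (hf.comp_measurable hT)
    (fun _ _ _ ↦ hgT.integrableOn) ?_
    (stronglyMeasurable_condExp.comp_measurable (comap_measurable T)).aestronglyMeasurable
  rintro _ ⟨B, hB, rfl⟩ -
  calc ∫ ω in T ⁻¹' B, ((P.map T)[f | m] ∘ T) ω ∂P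
      = ∫ b in B, (P.map T)[f | m] b ∂(P.map T) :=
        (setIntegral_map (hm B hB) integrable_condExp.1 hT.aemeasurable).symm
    _ = ∫ b in B, f b ∂(P.map T) := setIntegral_condExp hm hf hB
    _ = ∫ ω in T ⁻¹' B, (f ∘ T) ω ∂P := setIntegral_map (hm B hB) hf.1 hT.aemeasurable

lemma condExpL1Dist_map {T : Ω → β} (hT : Measurable T) (hm : m ≤ mβ) (hm' : m' ≤ mβ)
    {f : β → ℝ} (hf : Integrable f (P.map T)) :
    condExpL1Dist (P.map T) f m m' = condExpL1Dist P (f ∘ T) (m.comap T) (m'.comap T) := by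
  have hdist :
      AEStronglyMeasurable (fun b ↦ |(P.map T)[f | m] b - (P.map T)[f | m'] b|) (P.map T) :=
    (integrable_condExp.sub integrable_condExp).abs.1
  rw [condExpL1Dist, integral_map hT.aemeasurable hdist]
  refine integral_congr_ae ?_
  filter_upwards [condExp_map_comp_ae_eq hT hm hf, condExp_map_comp_ae_eq hT hm' hf] with ω h h'
  rw [← h, ← h', Function.comp_apply, Function.comp_apply]

lemma condExpL1Dist_mono_left {m₀ m₁ m₂ : MeasurableSpace β} (f : β → ℝ)
    (h₀₁ : m₀ ≤ m₁) (h₁₂ : m₁ ≤ m₂) (h₂ : m₂ ≤ mβ) :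
    condExpL1Dist μ f m₁ m₀ ≤ condExpL1Dist μ f m₂ m₀ := by
  have hproj : μ[μ[f | m₂] - μ[f | m₀] | m₁] =ᵐ[μ] μ[f | m₁] - μ[f | m₀] := by
    have hm₀ : μ[μ[f | m₀] | m₁] = μ[f | m₀] :=
      condExp_of_stronglyMeasurable (h₁₂.trans h₂) (stronglyMeasurable_condExp.mono h₀₁)
        integrable_condExp
    filter_upwards [condExp_sub (f := μ[f | m₂]) (g := μ[f | m₀]) integrable_condExp
      integrable_condExp m₁, condExp_condExp_of_le (f := f) h₁₂ h₂] with b hsub htower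
    rw [hsub, Pi.sub_apply, Pi.sub_apply, htower, hm₀]
  calc condExpL1Dist μ f m₁ m₀
      = ∫ b, |μ[μ[f | m₂] - μ[f | m₀] | m₁] b| ∂μ :=
        integral_congr_ae (hproj.fun_comp abs).symm
    _ ≤ condExpL1Dist μ f m₂ m₀ := integral_abs_condExp_le _

end CondExp

section Disintegration

variable {α β G : Type*} {mα : MeasurableSpace α} {m m' mβ : MeasurableSpace β}
  [NormedAddCommGroup G] [NormedSpace ℝ G]

lemma exists_countable_isPiSystem_generateFrom (hm : @MeasurableSpace.CountablyGenerated β m) :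
    ∃ S : Set (Set β), S.Countable ∧ IsPiSystem S ∧ Set.univ ∈ S ∧
      m = MeasurableSpace.generateFrom S := by
  obtain ⟨b, hb, rfl⟩ := hm.isCountablyGenerated
  exact ⟨generateSetAlgebra b, countable_generateSetAlgebra hb,
    fun _ hs _ ht _ ↦ isSetAlgebra_generateSetAlgebra.inter_mem hs ht,
    isSetAlgebra_generateSetAlgebra.univ_mem, generateFrom_generateSetAlgebra_eq.symm⟩

lemma setIntegral_eq_of_generateFrom_isPiSystem {μ : Measure β} {f g : β → G} {S : Set (Set β)}
    (hm : m ≤ mβ) (hS : m = MeasurableSpace.generateFrom S) (hSpi : IsPiSystem S)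
    (hSuniv : Set.univ ∈ S) (hf : Integrable f μ) (hg : Integrable g μ)
    (hfg : ∀ B ∈ S, ∫ b in B, f b ∂μ = ∫ b in B, g b ∂μ) {B : Set β} (hB : MeasurableSet[m] B) :
    ∫ b in B, f b ∂μ = ∫ b in B, g b ∂μ := by
  have hfg_univ : ∫ b, f b ∂μ = ∫ b, g b ∂μ := by simpa using hfg _ hSuniv
  induction B, hB using MeasurableSpace.induction_on_inter hS hSpi with
  | empty => simp
  | basic B hB => exact hfg B hB
  | compl B hB ih =>
    rw [setIntegral_compl (hm B hB) hf, setIntegral_compl (hm B hB) hg, ih, hfg_univ]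
  | iUnion B hdisj hB ih =>
    rw [integral_iUnion (fun i ↦ hm _ (hB i)) hdisj hf.integrableOn,
      integral_iUnion (fun i ↦ hm _ (hB i)) hdisj hg.integrableOn]
    exact tsum_congr ih

variable {ν : Measure α} {κ : Kernel α β}

lemma integrable_setIntegral_section [SFinite ν] [IsSFiniteKernel κ] {f : α × β → G}
    (hf : Integrable f (ν ⊗ₘ κ)) {B : Set β} (hB : MeasurableSet B) :
    Integrable (fun a ↦ ∫ b in B, f (a, b) ∂κ a) ν := by
  have hind : Integrable (fun a ↦ ∫ b, (Prod.snd ⁻¹' B).indicator f (a, b) ∂κ a) ν := by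
    simpa using (hf.indicator (measurable_snd hB)).integral_compProd
  convert hind using 2 with a
  exact (integral_indicator hB).symm

lemma ae_setIntegral_section_eq [CompleteSpace G] [SFinite ν] [IsSFiniteKernel κ]
    {f g : α × β → G} (hf : Integrable f (ν ⊗ₘ κ)) (hg : Integrable g (ν ⊗ₘ κ))
    {B : Set β} (hB : MeasurableSet B)
    (hfg : ∀ C, MeasurableSet C →
      ∫ z in C ×ˢ B, f z ∂(ν ⊗ₘ κ) = ∫ z in C ×ˢ B, g z ∂(ν ⊗ₘ κ)) :
    ∀ᵐ a ∂ν, ∫ b in B, f (a, b) ∂κ a = ∫ b in B, g (a, b) ∂κ a := by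
  refine Integrable.ae_eq_of_forall_setIntegral_eq _ _ (integrable_setIntegral_section hf hB)
    (integrable_setIntegral_section hg hB) fun C hC _ ↦ ?_
  rw [← Measure.setIntegral_compProd hC hB hf.integrableOn,
    ← Measure.setIntegral_compProd hC hB hg.integrableOn, hfg C hC]

lemma measurableSpace_prod_mono_right (hm : m ≤ mβ) : mα.prod m ≤ mα.prod mβ :=
  sup_le_sup le_rfl (MeasurableSpace.comap_mono hm)

variable [IsFiniteMeasure ν] [IsFiniteKernel κ]

-- Countable generation of `m` makes the exceptional null set of `a` independent of the
-- `m`-measurable set over which the sections are integrated.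
lemma ae_condExp_compProd_section_ae_eq [CompleteSpace G] (hm : m ≤ mβ)
    (hcg : @MeasurableSpace.CountablyGenerated β m) {f : α × β → G}
    (hf : Integrable f (ν ⊗ₘ κ)) :
    ∀ᵐ a ∂ν, (fun b ↦ (ν ⊗ₘ κ)[f | mα.prod m] (a, b)) =ᵐ[κ a] (κ a)[fun b ↦ f (a, b) | m] := by
  obtain ⟨S, hScount, hSpi, hSuniv, hS⟩ := exists_countable_isPiSystem_generateFrom hcg
  have hSm : ∀ B ∈ S, MeasurableSet[m] B := fun B hB ↦
    hS ▸ MeasurableSpace.measurableSet_generateFrom hB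
  have hint : Integrable ((ν ⊗ₘ κ)[f | mα.prod m]) (ν ⊗ₘ κ) := integrable_condExp
  have hsections : ∀ᵐ a ∂ν, ∀ B ∈ S,
      ∫ b in B, (ν ⊗ₘ κ)[f | mα.prod m] (a, b) ∂κ a = ∫ b in B, f (a, b) ∂κ a := by
    refine (ae_ball_iff hScount).2 fun B hB ↦ ?_
    refine ae_setIntegral_section_eq hint hf (hm B (hSm B hB)) fun C hC ↦ ?_
    exact setIntegral_condExp (measurableSpace_prod_mono_right hm) hf
      (@MeasurableSet.prod _ _ mα m _ _ hC (hSm B hB))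
  filter_upwards [hsections, ((Measure.integrable_compProd_iff hint.1).1 hint).1,
    ((Measure.integrable_compProd_iff hf.1).1 hf).1] with a ha hinta hfa
  refine ae_eq_condExp_of_forall_setIntegral_eq hm hfa (fun _ _ _ ↦ hinta.integrableOn)
    (fun B hB _ ↦ setIntegral_eq_of_generateFrom_isPiSystem hm hS hSpi hSuniv hinta hfa ha hB) ?_
  exact (stronglyMeasurable_condExp.comp_measurable
    (@measurable_prodMk_left _ _ mα m a)).aestronglyMeasurable

lemma integral_section_ae_eq_condExpL1Dist (hm : m ≤ mβ)
    (hcg : @MeasurableSpace.CountablyGenerated β m) (hm' : m' ≤ mβ)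
    (hcg' : @MeasurableSpace.CountablyGenerated β m') {f : α × β → ℝ}
    (hf : Integrable f (ν ⊗ₘ κ)) :
    (fun a ↦ ∫ b, |(ν ⊗ₘ κ)[f | mα.prod m] (a, b) - (ν ⊗ₘ κ)[f | mα.prod m'] (a, b)| ∂κ a) =ᵐ[ν]
      fun a ↦ condExpL1Dist (κ a) (fun b ↦ f (a, b)) m m' := by
  filter_upwards [ae_condExp_compProd_section_ae_eq hm hcg hf,
    ae_condExp_compProd_section_ae_eq hm' hcg' hf] with a ha ha'
  refine integral_congr_ae ?_
  filter_upwards [ha, ha'] with b hb hb'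
  rw [hb, hb']

lemma integrable_condExpL1Dist_section (hm : m ≤ mβ)
    (hcg : @MeasurableSpace.CountablyGenerated β m) (hm' : m' ≤ mβ)
    (hcg' : @MeasurableSpace.CountablyGenerated β m') {f : α × β → ℝ}
    (hf : Integrable f (ν ⊗ₘ κ)) :
    Integrable (fun a ↦ condExpL1Dist (κ a) (fun b ↦ f (a, b)) m m') ν := by
  have hdist := (integrable_condExp (μ := ν ⊗ₘ κ) (m := mα.prod m) (f := f)).sub
    (integrable_condExp (m := mα.prod m') (f := f)) |>.abs
  refine Integrable.congr ?_ (integral_section_ae_eq_condExpL1Dist hm hcg hm' hcg' hf)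
  simpa using integrable_setIntegral_section hdist MeasurableSet.univ

lemma condExpL1Dist_compProd (hm : m ≤ mβ)
    (hcg : @MeasurableSpace.CountablyGenerated β m) (hm' : m' ≤ mβ)
    (hcg' : @MeasurableSpace.CountablyGenerated β m') {f : α × β → ℝ}
    (hf : Integrable f (ν ⊗ₘ κ)) :
    condExpL1Dist (ν ⊗ₘ κ) f (mα.prod m) (mα.prod m') =
      ∫ a, condExpL1Dist (κ a) (fun b ↦ f (a, b)) m m' ∂ν := by
  rw [condExpL1Dist,
    Measure.integral_compProd (by exact (integrable_condExp.sub integrable_condExp).abs)]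
  exact integral_congr_ae (integral_section_ae_eq_condExpL1Dist hm hcg hm' hcg' hf)

end Disintegration

lemma tendsto_integral_zero_iff_ae_tendsto_of_antitone {α ι : Type*} [MeasurableSpace α]
    [Preorder ι] [IsDirectedOrder ι] [Nonempty ι] [(atTop : Filter ι).IsCountablyGenerated]
    {ν : Measure α} {u : ι → α → ℝ} (hint : ∀ i, Integrable (u i) ν) (hnonneg : ∀ i a, 0 ≤ u i a)
    (hanti : Antitone u) :
    Tendsto (fun i ↦ ∫ a, u i a ∂ν) atTop (𝓝 0) ↔
      ∀ᵐ a ∂ν, Tendsto (fun i ↦ u i a) atTop (𝓝 0) := by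
  constructor
  · intro h
    have hmeas : TendstoInMeasure ν u atTop 0 := by
      refine tendstoInMeasure_of_tendsto_eLpNorm one_ne_zero (fun i ↦ (hint i).1)
        aestronglyMeasurable_zero ?_
      simpa [eLpNorm_one_eq_lintegral_enorm, ← ofReal_integral_norm_eq_lintegral_enorm, hint,
        abs_of_nonneg, hnonneg] using ENNReal.tendsto_ofReal h
    obtain ⟨ns, hns, hae⟩ := hmeas.exists_seq_tendsto_ae'
    filter_upwards [hae] with a ha
    exact (tendsto_iff_tendsto_subseq_of_antitone (fun i j hij ↦ hanti hij a) hns).2 ha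
  · intro h
    obtain ⟨i₀⟩ := ‹Nonempty ι›
    have hdom : ∀ᶠ i in atTop, ∀ᵐ a ∂ν, ‖u i a‖ ≤ u i₀ a := by
      filter_upwards [eventually_ge_atTop i₀] with i hi
      exact .of_forall fun a ↦ (Real.norm_of_nonneg (hnonneg i a)).trans_le (hanti hi a)
    simpa using tendsto_integral_filter_of_dominated_convergence (u i₀)
      (.of_forall fun i ↦ (hint i).1) hdom (hint i₀) h

section HasCondDistrib

variable {Ω α β : Type*} {mΩ : MeasurableSpace Ω} {mα : MeasurableSpace α}
  {m mβ : MeasurableSpace β} {P : Measure Ω} [IsFiniteMeasure P] {X : Ω → β} {Y : Ω → α}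
  {κ : Kernel α β} [IsFiniteKernel κ]

lemma hasCondDistrib_of_ae_eq_condExp (hX : Measurable X) (hY : Measurable Y)
    (hκ : ∀ A, MeasurableSet A →
      (fun ω ↦ (κ (Y ω) A).toReal) =ᵐ[P]
        P[fun ω ↦ A.indicator (fun _ ↦ (1 : ℝ)) (X ω) | mα.comap Y]) :
    HasCondDistrib X Y κ P := by
  refine ⟨by fun_prop, Measure.ext_prod fun {C B} hC hB ↦ ?_⟩
  have hint : Integrable ((X ⁻¹' B).indicator fun _ ↦ (1 : ℝ)) P :=
    (integrable_const 1).indicator (hX hB)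
  have hreal : ∫ ω in Y ⁻¹' C, (κ (Y ω)).real B ∂P = P.real (Y ⁻¹' C ∩ X ⁻¹' B) :=
    calc ∫ ω in Y ⁻¹' C, (κ (Y ω)).real B ∂P
        = ∫ ω in Y ⁻¹' C, (P[(X ⁻¹' B).indicator fun _ ↦ (1 : ℝ) | mα.comap Y]) ω ∂P :=
          integral_congr_ae (ae_restrict_of_ae (hκ B hB))
      _ = ∫ ω in Y ⁻¹' C, (X ⁻¹' B).indicator (fun _ ↦ (1 : ℝ)) ω ∂P :=
          setIntegral_condExp hY.comap_le hint ⟨C, hC, rfl⟩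
      _ = P.real (Y ⁻¹' C ∩ X ⁻¹' B) := by
          simp [setIntegral_indicator (hX hB)]
  have hκY : Integrable (fun ω ↦ (κ (Y ω)).real B) (P.restrict (Y ⁻¹' C)) :=
    ((Kernel.IsFiniteKernel.integrable (P.map Y) κ hB).comp_measurable hY).integrableOn
  rw [Measure.map_apply (hY.prodMk hX) (hC.prod hB), Measure.compProd_apply_prod hC hB,
    setLIntegral_map hC (κ.measurable_coe hB) hY, Set.mk_preimage_prod,
    ← ofReal_measureReal, ← hreal, ofReal_integral_eq_lintegral_ofReal hκY
      (.of_forall fun _ ↦ measureReal_nonneg)]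
  exact lintegral_congr fun _ ↦ ofReal_measureReal

lemma comap_prodMk_prod (X : Ω → β) (Y : Ω → α) (m : MeasurableSpace β) :
    (mα.prod m).comap (fun ω ↦ (Y ω, X ω)) = m.comap X ⊔ mα.comap Y := by
  rw [MeasurableSpace.prod, MeasurableSpace.comap_sup, MeasurableSpace.comap_comp,
    MeasurableSpace.comap_comp, sup_comm]
  rfl

lemma countablyGenerated_bot : @MeasurableSpace.CountablyGenerated β ⊥ :=
  @MeasurableSpace.CountablyGenerated.mk β ⊥ ⟨∅, by simp⟩

lemma condExpL1Dist_eq_integral_of_hasCondDistrib (hm : m ≤ mβ)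
    (hcg : @MeasurableSpace.CountablyGenerated β m) (hX : Measurable X) (hY : Measurable Y)
    (hκ : HasCondDistrib X Y κ P) {f : α × β → ℝ} (hf : Integrable f (P.map Y ⊗ₘ κ)) :
    condExpL1Dist P (fun ω ↦ f (Y ω, X ω)) (m.comap X ⊔ mα.comap Y) (mα.comap Y) =
      ∫ y, condExpL1Dist (κ y) (fun x ↦ f (y, x)) m ⊥ ∂(P.map Y) := by
  have hσY : (mα.prod ⊥).comap (fun ω ↦ (Y ω, X ω)) = mα.comap Y := by
    rw [comap_prodMk_prod, MeasurableSpace.comap_bot, bot_sup_eq]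
  have hf' : Integrable f (P.map fun ω ↦ (Y ω, X ω)) := by rwa [hκ.map_eq]
  calc condExpL1Dist P (fun ω ↦ f (Y ω, X ω)) (m.comap X ⊔ mα.comap Y) (mα.comap Y)
      = condExpL1Dist (P.map fun ω ↦ (Y ω, X ω)) f (mα.prod m) (mα.prod ⊥) := by
        rw [condExpL1Dist_map (hY.prodMk hX) (measurableSpace_prod_mono_right hm)
          (measurableSpace_prod_mono_right bot_le) hf', comap_prodMk_prod, hσY]
        rfl
    _ = ∫ y, condExpL1Dist (κ y) (fun x ↦ f (y, x)) m ⊥ ∂(P.map Y) := by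
        rw [hκ.map_eq, condExpL1Dist_compProd hm hcg bot_le countablyGenerated_bot hf]

theorem tendsto_condExpL1Dist_iff_ae {ι : Type*} [Preorder ι] [IsDirectedOrder ι] [Nonempty ι]
    [(atTop : Filter ι).IsCountablyGenerated] {m : ι → MeasurableSpace β} (hanti : Antitone m)
    (hm : ∀ i, m i ≤ mβ) (hcg : ∀ i, @MeasurableSpace.CountablyGenerated β (m i))
    (hX : Measurable X) (hY : Measurable Y) (hκ : HasCondDistrib X Y κ P) {f : α × β → ℝ}
    (hf : Integrable f (P.map Y ⊗ₘ κ)) :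
    Tendsto (fun i ↦ condExpL1Dist P (fun ω ↦ f (Y ω, X ω)) ((m i).comap X ⊔ mα.comap Y)
        (mα.comap Y)) atTop (𝓝 0) ↔
      ∀ᵐ y ∂(P.map Y), Tendsto (fun i ↦ condExpL1Dist (κ y) (fun x ↦ f (y, x)) (m i) ⊥)
        atTop (𝓝 0) := by
  simp only [fun i ↦ condExpL1Dist_eq_integral_of_hasCondDistrib (hm i) (hcg i) hX hY hκ hf]
  exact tendsto_integral_zero_iff_ae_tendsto_of_antitone
    (fun i ↦ integrable_condExpL1Dist_section (hm i) (hcg i) bot_le countablyGenerated_bot hf)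
    (fun _ _ ↦ condExpL1Dist_nonneg _)
    (fun i j hij y ↦ condExpL1Dist_mono_left _ bot_le (hanti hij) (hm i))

end HasCondDistrib

section Cylinder

lemma cylσ_le (S : Set (Site d)) : cylσ E S ≤ MeasurableSpace.pi :=
  cylinderEvents_le_pi

lemma cylσ_mono {S T : Set (Site d)} (h : S ⊆ T) : cylσ E S ≤ cylσ E T :=
  cylinderEvents_mono h

lemma outsideσ_eq_comap_cylσ {Ω : Type*} [MeasurableSpace Ω] (X : Ω → Conf E d)
    (V : Finset (Site d)) : outsideσ X V = (cylσ E (↑V : Set (Site d))ᶜ).comap X := by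
  simp only [outsideσ, cylσ, MeasurableSpace.comap_iSup, MeasurableSpace.comap_comp]
  rfl

lemma countablyGenerated_iSup {α : Type*} {ι : Sort*} [Countable ι] {m : ι → MeasurableSpace α}
    (hm : ∀ i, @MeasurableSpace.CountablyGenerated α (m i)) :
    @MeasurableSpace.CountablyGenerated α (⨆ i, m i) := by
  choose b hb hmb using fun i ↦ (hm i).isCountablyGenerated
  refine @MeasurableSpace.CountablyGenerated.mk _ (⨆ i, m i)
    ⟨⋃ i, b i, Set.countable_iUnion hb, ?_⟩
  simp only [hmb, MeasurableSpace.iSup_generateFrom]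

lemma countablyGenerated_cylσ [MeasurableSpace.CountablyGenerated E] (S : Set (Site d)) :
    @MeasurableSpace.CountablyGenerated _ (cylσ E S) :=
  countablyGenerated_iSup fun _ ↦ countablyGenerated_iSup fun _ ↦ .comap _

lemma countable_measurableSet_cylσ [Finite E] (V : Finset (Site d)) :
    {A : Set (Conf E d) | MeasurableSet[cylσ E (↑V : Set (Site d))] A}.Countable := by
  have hle : cylσ E (↑V : Set (Site d)) ≤ MeasurableSpace.comap V.restrict ⊤ := by
    refine iSup₂_le fun v hv ↦ ?_
    rintro _ ⟨B, -, rfl⟩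
    exact ⟨{z | z ⟨v, hv⟩ ∈ B}, trivial, rfl⟩
  refine (Set.countable_range fun B : Set (V → E) ↦ V.restrict ⁻¹' B).mono fun A hA ↦ ?_
  obtain ⟨B, -, rfl⟩ := hle A hA
  exact ⟨B, rfl⟩

end Cylinder

lemma measMixing_iff {μ : Measure (Conf E d)} [IsProbabilityMeasure μ] :
    MeasMixing μ ↔ ∀ (V : Finset (Site d)) (A : Set (Conf E d)),
      MeasurableSet[cylσ E (↑V : Set (Site d))] A →
      Tendsto (fun W : Finset (Site d) ↦ condExpL1Dist μ (A.indicator fun _ ↦ 1)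
        (cylσ E (↑W : Set (Site d))ᶜ) ⊥) atTop (𝓝 0) := by
  refine forall₃_congr fun V A hA ↦ ?_
  simp only [condExpL1Dist, condExp_bot, integral_indicator_const _ (cylσ_le _ A hA),
    smul_eq_mul, mul_one, measureReal_def]

theorem statement15_general [Finite E] {F Ω : Type*} [MeasurableSpace F] [MeasurableSpace Ω]
    {P : Measure Ω} [IsFiniteMeasure P] {X : Ω → Conf E d} (hX : Measurable X)
    {Y : Ω → Site d → F} (hY : Measurable Y) {κ : Kernel (Site d → F) (Conf E d)}
    [IsMarkovKernel κ] (hκ : HasCondDistrib X Y κ P) :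
    CondMixing P X Y ↔ ∀ᵐ y ∂(P.map Y), MeasMixing (κ y) := by
  simp only [measMixing_iff, ae_all_iff]
  refine forall_congr' fun V ↦ ?_
  refine Iff.trans (forall₂_congr fun A hA ↦ ?_)
    (ae_ball_iff (countable_measurableSet_cylσ V)).symm
  have hanti : Antitone fun W : Finset (Site d) ↦ cylσ E (↑W : Set (Site d))ᶜ := fun W W' h ↦
    cylσ_mono (Set.compl_subset_compl.2 (Finset.coe_subset.2 h))
  have hf : Integrable (fun z ↦ A.indicator (fun _ ↦ (1 : ℝ)) z.2) (P.map Y ⊗ₘ κ) :=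
    (integrable_const (1 : ℝ)).indicator (measurable_snd (cylσ_le _ A hA))
  simp only [outsideσ_eq_comap_cylσ]
  exact tendsto_condExpL1Dist_iff_ae hanti (fun _ ↦ cylσ_le _) (fun _ ↦ countablyGenerated_cylσ _)
    hX hY hκ hf

/-- **Proposition 5.6(3).**  For a hidden Markov random field with local nondegenerate
observations, `(X, Y)` is conditionally mixing if and only if, for almost every `y` under
the law of `Y`, the regular conditional distribution `P^y = P[X ∈ · | Y = y]` is mixing. -/
theorem statement15 [Fintype E] {F : Type*} [MeasurableSpace F] [StandardBorelSpace F]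
    {Ω : Type*} [MeasurableSpace Ω] (P : Measure Ω) [IsProbabilityMeasure P]
    (γ : Finset (Site d) → Conf E d → Measure (Conf E d)) (hγ : IsSpecification γ)
    (φ : Measure F) [SigmaFinite φ]
    (g : Site d → E → F → ℝ) (hgm : ∀ v, Measurable (Function.uncurry (g v)))
    (hgpos : ∀ v e y, 0 < g v e y) (hgint : ∀ v e, ∫ y, g v e y ∂φ = 1)
    (X : Ω → Conf E d) (hXm : Measurable X)
    (hXspec : ∀ (V : Finset (Site d)) (A : Set (Conf E d)), MeasurableSet A →
      (fun ω => (γ V (X ω) A).toReal) =ᵐ[P]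
        P[(fun ω => A.indicator (fun _ => (1 : ℝ)) (X ω))|outsideσ X V])
    (Y : Ω → Site d → F) (hYm : Measurable Y)
    (hobs : ∀ (S : Finset (Site d)) (B : Site d → Set F), (∀ v, MeasurableSet (B v)) →
      P[(fun ω => Set.indicator {ω' | ∀ v ∈ S, Y ω' v ∈ B v} (fun _ => (1 : ℝ)) ω)|
          MeasurableSpace.comap X inferInstance] =ᵐ[P]
        fun ω => ∏ v ∈ S, ∫ y in B v, g v (X ω v) y ∂φ)
    (κ : (Site d → F) → Measure (Conf E d))
    (hκprob : ∀ y, IsProbabilityMeasure (κ y))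
    (hκmeas : ∀ A : Set (Conf E d), MeasurableSet A → Measurable fun y => κ y A)
    (hκcond : ∀ A : Set (Conf E d), MeasurableSet A →
      (fun ω => (κ (Y ω) A).toReal) =ᵐ[P]
        P[(fun ω => A.indicator (fun _ => (1 : ℝ)) (X ω))|
          MeasurableSpace.comap Y inferInstance]) :
    CondMixing P X Y ↔ ∀ᵐ y ∂(P.map Y), MeasMixing (κ y) :=
  let K : Kernel (Site d → F) (Conf E d) := ⟨κ, Measure.measurable_of_measurable_coe κ hκmeas⟩
  have : IsMarkovKernel K := ⟨hκprob⟩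
  statement15_general (κ := K) hXm hYm (hasCondDistrib_of_ae_eq_condExp hXm hYm hκcond)

end RandomField
end
end
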